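/- Let f be a polynomial with complex coefficients, and suppose ∫_0^1 f(x)^p dx = 0 for every positive integer p. Then f is the zero polynomial. -/

import Mathlib

/-!
The proof is arithmetic. The moment `∫₀¹ fⁿ` equals `∑ₖ cₖ / (k + 1)`, where the `cₖ` are the
coefficients of `fⁿ`; this expression (`unitIntegral`) makes sense over every `ℚ`-algebra and
commutes with algebra homomorphisms.

*Reduction to algebraic coefficients.* Let `d` be the degree of `f` and `a` its leading coefficient.
The `ℚ`-algebra generated by the coefficients of `f` and by `a⁻¹` is of finite type, so by Zariski's
lemma its quotient by a maximal ideal is a number field. Since `a` is a unit, its image is nonzero.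
Hence it suffices to treat polynomials over a finite extension `K` of `ℚ`
(`exists_unitIntegral_pow_ne_zero`).

*Algebraic coefficients.* Let `N` be a nonzero integer such that `N` times each coefficient of `f`,
and `N a⁻¹`, are integral over `ℤ`. If `d > 0`, choose a prime `p > |N|` with `p = n d + 1`. In the
moment of `(N f)ⁿ` only the top term `(N a)ⁿ / p` has a denominator divisible by `p`. If the moment
vanishes, multiplying by `(p - 1)! · p` and by `(N a⁻¹)ⁿ` shows that `(p - 1)! N²ⁿ / p` is
integral over `ℤ`, so `p` divides `(p - 1)! N²ⁿ`, a contradiction.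
-/

open Polynomial

/-- The formal integral over `[0, 1]` of a polynomial over a `ℚ`-algebra,
`∑ cₖ Xᵏ ↦ ∑ cₖ / (k + 1)`. -/
noncomputable def unitIntegral {R : Type*} [CommRing R] [Algebra ℚ R] (q : R[X]) : R :=
  q.sum fun k c => ((k : ℚ) + 1)⁻¹ • c

lemma unitIntegral_eq_sum_range {R : Type*} [CommRing R] [Algebra ℚ R] (q : R[X]) {m : ℕ}
    (hm : q.natDegree < m) :
    unitIntegral q = ∑ k ∈ Finset.range m, ((k : ℚ) + 1)⁻¹ • q.coeff k :=
  Polynomial.sum_over_range' q (fun _ => smul_zero _) m hm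

lemma unitIntegral_map {R S : Type*} [CommRing R] [Algebra ℚ R] [CommRing S] [Algebra ℚ S]
    (φ : R →ₐ[ℚ] S) (q : R[X]) :
    unitIntegral (q.map (φ : R →+* S)) = φ (unitIntegral q) := by
  rw [unitIntegral_eq_sum_range q (Nat.lt_succ_self _),
    unitIntegral_eq_sum_range (q.map (φ : R →+* S)) (Nat.lt_succ_of_le natDegree_map_le), map_sum]
  refine Finset.sum_congr rfl fun k _ => ?_
  rw [map_smul, coeff_map]
  rfl

lemma integral_eval_eq_unitIntegral (q : ℂ[X]) :
    ∫ x in (0:ℝ)..1, q.eval (x : ℂ) = unitIntegral q := by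
  rw [unitIntegral_eq_sum_range q (Nat.lt_succ_self _)]
  simp_rw [eval_eq_sum_range]
  rw [intervalIntegral.integral_finsetSum]
  · refine Finset.sum_congr rfl fun k _ => ?_
    rw [intervalIntegral.integral_const_mul]
    have h : ∫ x in (0:ℝ)..1, (x : ℂ) ^ k = ((k : ℂ) + 1)⁻¹ := by
      simp_rw [← Complex.ofReal_pow]
      rw [intervalIntegral.integral_ofReal, integral_pow]
      simp
    rw [h, Algebra.smul_def, mul_comm]
    simp
  · intro k _
    exact Continuous.intervalIntegrable (by fun_prop) _ _

lemma isIntegral_coeff_pow {K : Type*} [CommRing K] (q : K[X])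
    (hq : ∀ i, IsIntegral ℤ (q.coeff i)) (n j : ℕ) : IsIntegral ℤ ((q ^ n).coeff j) := by
  have := isIntegral_coeff_prod (R := ℤ) (Finset.range n) (fun _ => q) (fun _ _ => hq) j
  simpa using this

/-- If the moment of a polynomial of degree at most `m` with integral coefficients `cₖ` vanishes,
then `m! cₘ` is `m + 1` times an integral element, because `m! / (k + 1)` is an integer for all
`k < m`. This is used for `m + 1` prime. -/
lemma exists_isIntegral_of_unitIntegral_eq_zero {K : Type*} [Field K] [Algebra ℚ K] (q : K[X])
    (hq : ∀ i, IsIntegral ℤ (q.coeff i)) {m : ℕ} (hdeg : q.natDegree ≤ m)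
    (h0 : unitIntegral q = 0) :
    ∃ y : K, IsIntegral ℤ y ∧ (m.factorial : K) * q.coeff m = ((m + 1 : ℕ) : K) * y := by
  have : CharZero K := algebraRat.charZero K
  rw [unitIntegral_eq_sum_range q (Nat.lt_succ_of_le hdeg), Finset.sum_range_succ] at h0
  refine ⟨-∑ k ∈ Finset.range m, ((m.factorial / (k + 1) : ℕ) : K) * q.coeff k,
    (IsIntegral.sum _ fun k _ => ?_).neg, ?_⟩
  · exact (map_natCast (algebraMap ℤ K) _ ▸ isIntegral_algebraMap).mul (hq k)
  · have hm : ((m : K) + 1) ≠ 0 := by exact_mod_cast m.succ_ne_zero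
    have h1 : ∑ k ∈ Finset.range m, ((m.factorial / (k + 1) : ℕ) : K) * q.coeff k
        = (m.factorial : K) * ∑ k ∈ Finset.range m, ((k : ℚ) + 1)⁻¹ • q.coeff k := by
      rw [Finset.mul_sum]
      refine Finset.sum_congr rfl fun k hk => ?_
      have hdvd : k + 1 ∣ m.factorial :=
        Nat.dvd_factorial k.succ_pos (Finset.mem_range.mp hk)
      have hk0 : ((k + 1 : ℕ) : K) ≠ 0 := by exact_mod_cast k.succ_ne_zero
      rw [Nat.cast_div hdvd hk0, Algebra.smul_def]
      simp
      ring
    rw [h1, eq_neg_of_add_eq_zero_left h0, Algebra.smul_def]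
    simp
    field_simp

/-- Over a finite extension of `ℚ`, a polynomial with nonzero `d`-th coefficient and degree at
most `d` has a nonvanishing moment. -/
lemma exists_unitIntegral_pow_ne_zero {K : Type*} [Field K] [Algebra ℚ K] [Module.Finite ℚ K]
    (g : K[X]) {d : ℕ} (hd : 0 < d) (hdeg : g.natDegree ≤ d) (hg : g.coeff d ≠ 0) :
    ∃ n : ℕ, 0 < n ∧ unitIntegral (g ^ n) ≠ 0 := by
  classical
  have : CharZero K := algebraRat.charZero K
  have : Algebra.IsAlgebraic ℤ K := (IsFractionRing.comap_isAlgebraic_iff (K := ℚ)).mpr inferInstance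
  obtain ⟨N, hN0, hN⟩ := Algebra.IsAlgebraic.exists_integral_multiples ℤ
    (insert (g.coeff d)⁻¹ ((Finset.range (d + 1)).image g.coeff))
  obtain ⟨p, hp, hNp, hpd⟩ := Nat.exists_prime_gt_modEq_one (k := d) N.natAbs hd.ne'
  obtain ⟨n, hn⟩ := (Nat.modEq_iff_dvd' hp.one_le).mp hpd.symm
  have hpn : p = n * d + 1 := by
    have := hp.one_le
    rw [mul_comm]
    omega
  have hn0 : 0 < n := by
    rcases Nat.eq_zero_or_pos n with rfl | h
    · exact absurd hp (by simp [hpn, Nat.not_prime_one])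
    · exact h
  refine ⟨n, hn0, fun h0 => ?_⟩
  have hinv : IsIntegral ℤ (N • (g.coeff d)⁻¹) := hN _ (Finset.mem_insert_self _ _)
  have hcoeff : ∀ i, IsIntegral ℤ ((C (N : K) * g).coeff i) := by
    intro i
    rw [coeff_C_mul]
    rcases le_or_gt i d with hi | hi
    · rw [← zsmul_eq_mul]
      exact hN _ (Finset.mem_insert_of_mem
        (Finset.mem_image_of_mem _ (Finset.mem_range.mpr (Nat.lt_succ_of_le hi))))
    · rw [coeff_eq_zero_of_natDegree_lt (hdeg.trans_lt hi), mul_zero]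
      exact isIntegral_zero
  have hdegN : (C (N : K) * g).natDegree ≤ d := (natDegree_C_mul_le _ _).trans hdeg
  have hdegn : ((C (N : K) * g) ^ n).natDegree ≤ n * d := natDegree_pow_le_of_le n hdegN
  have h0' : unitIntegral ((C (N : K) * g) ^ n) = 0 := by
    rw [unitIntegral_eq_sum_range _ (Nat.lt_succ_of_le hdegn)]
    rw [unitIntegral_eq_sum_range _ (Nat.lt_succ_of_le (natDegree_pow_le_of_le n hdeg))] at h0
    rw [mul_pow, ← C_pow]
    simp_rw [coeff_C_mul, ← mul_smul_comm]
    rw [← Finset.mul_sum, h0, mul_zero]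
  obtain ⟨y, hy, hyeq⟩ := exists_isIntegral_of_unitIntegral_eq_zero _
    (isIntegral_coeff_pow _ hcoeff n) hdegn h0'
  rw [coeff_pow_of_natDegree_le hdegN, coeff_C_mul, ← hpn] at hyeq
  set z : K := y * (N • (g.coeff d)⁻¹) ^ n with hz
  have hzint : IsIntegral ℤ z := hy.mul (hinv.pow n)
  have hp0 : (p : K) ≠ 0 := by exact_mod_cast hp.ne_zero
  have hzeq : (((n * d).factorial * N ^ (2 * n) : ℤ) : K) = p * z := by
    rw [hz, ← mul_assoc, ← hyeq, zsmul_eq_mul, mul_assoc, ← mul_pow]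
    have : (N : K) * g.coeff d * (N * (g.coeff d)⁻¹) = N ^ 2 := by field_simp
    rw [this, ← pow_mul]
    push_cast
    rfl
  -- `z` is rational and integral over `ℤ`, hence an integer.
  have hzrat : z = algebraMap ℚ K ((((n * d).factorial * N ^ (2 * n) : ℤ) : ℚ) / p) := by
    rw [map_div₀, map_intCast, map_natCast, hzeq]
    field_simp
  rw [hzrat, isIntegral_algebraMap_iff (algebraMap ℚ K).injective,
    IsIntegrallyClosed.isIntegral_iff] at hzint
  obtain ⟨w, hw⟩ := hzint
  have hdvd : (p : ℤ) ∣ (n * d).factorial * N ^ (2 * n) := by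
    refine ⟨w, ?_⟩
    have hpQ : (p : ℚ) ≠ 0 := by exact_mod_cast hp.ne_zero
    rw [eq_div_iff hpQ] at hw
    have hw' : (w : ℚ) * p = (((n * d).factorial * N ^ (2 * n) : ℤ) : ℚ) := hw
    rw [mul_comm (p : ℤ) w]
    exact_mod_cast hw'.symm
  rcases (Nat.prime_iff_prime_int.mp hp).dvd_or_dvd hdvd with h | h
  · have := hp.dvd_factorial.mp (Int.natCast_dvd_natCast.mp h)
    omega
  · have h2 := Int.natCast_dvd.mp ((Nat.prime_iff_prime_int.mp hp).dvd_of_dvd_pow h)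
    exact absurd (Nat.le_of_dvd (Int.natAbs_pos.mpr hN0) h2) (not_le.mpr hNp)

theorem polynomial_vanishing_moments
    (f : Polynomial ℂ)
    (h : ∀ p : ℕ, 0 < p → ∫ x in (0:ℝ)..1, (f.eval (x : ℂ)) ^ p = 0) :
    f = 0 := by
  classical
  have hf : ∀ n : ℕ, 0 < n → unitIntegral (f ^ n) = 0 := by
    intro n hn
    rw [← integral_eval_eq_unitIntegral]
    simpa using h n hn
  by_contra hne
  rcases Nat.eq_zero_or_pos f.natDegree with hd | hd
  · -- A constant is its own first moment.
    have h1 := hf 1 one_pos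
    rw [pow_one, unitIntegral_eq_sum_range f (m := 1) (by omega)] at h1
    rw [eq_C_of_natDegree_eq_zero hd] at hne
    simp at h1
    exact hne (by rw [h1, C_0])
  have ha : f.leadingCoeff ≠ 0 := leadingCoeff_ne_zero.mpr hne
  let s : Finset ℂ := insert f.leadingCoeff⁻¹ f.coeffs
  let A : Subalgebra ℚ ℂ := Algebra.adjoin ℚ (s : Set ℂ)
  have hA : Algebra.FiniteType ℚ A := (Subalgebra.fg_iff_finiteType A).mp ⟨s, rfl⟩
  have hmem : ∀ i, f.coeff i ∈ A := by
    intro i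
    by_cases hi : f.coeff i = 0
    · rw [hi]
      exact A.zero_mem
    · exact Algebra.subset_adjoin (Finset.mem_coe.mpr
        (Finset.mem_insert_of_mem (coeff_mem_coeffs hi)))
  have hinv : f.leadingCoeff⁻¹ ∈ A :=
    Algebra.subset_adjoin (Finset.mem_coe.mpr (Finset.mem_insert_self _ _))
  obtain ⟨g, hg⟩ : ∃ g : A[X], g.map (A.val : A →+* ℂ) = f := by
    have := (lifts_iff_coeff_lifts (f := (A.val : A →+* ℂ)) f).mpr fun i => ⟨⟨_, hmem i⟩, rfl⟩
    exact (lifts_iff_set_range _).mp this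
  have hinj : Function.Injective (A.val : A →+* ℂ) := Subtype.val_injective
  have hgd : g.natDegree = f.natDegree := by
    rw [← hg, natDegree_map_eq_of_injective hinj]
  have hgint : ∀ n : ℕ, 0 < n → unitIntegral (g ^ n) = 0 := by
    intro n hn
    have := hf n hn
    rw [← hg, ← Polynomial.map_pow, unitIntegral_map] at this
    exact hinj (this.trans (map_zero _).symm)
  have hunit : g.coeff f.natDegree * ⟨_, hinv⟩ = 1 := by
    apply hinj
    have : (A.val : A →+* ℂ) (g.coeff f.natDegree) = f.leadingCoeff := by
      rw [← coeff_map, hg, leadingCoeff]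
    rw [map_mul, this, map_one]
    exact mul_inv_cancel₀ ha
  obtain ⟨M, hM⟩ := Ideal.exists_maximal A
  let := Ideal.Quotient.field M
  have : Module.Finite ℚ (A ⧸ M) := finite_of_finite_type_of_isJacobsonRing ℚ (A ⧸ M)
  let φ : A →ₐ[ℚ] A ⧸ M := Ideal.Quotient.mkₐ ℚ M
  have hlead : (g.map (φ : A →+* A ⧸ M)).coeff f.natDegree ≠ 0 := by
    intro h0
    rw [coeff_map] at h0
    have := congrArg (φ : A →+* A ⧸ M) hunit
    rw [map_mul, h0, zero_mul, map_one] at this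
    exact zero_ne_one this
  obtain ⟨n, hn, hne0⟩ := exists_unitIntegral_pow_ne_zero (g.map (φ : A →+* A ⧸ M)) hd
    (natDegree_map_le.trans hgd.le) hlead
  apply hne0
  rw [← Polynomial.map_pow, unitIntegral_map, hgint n hn, map_zero]
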